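/- For every triple of signs ε = (ε_τ, ε_α, ε_β) ∈ {−1,1}³ one has Σ_T^{(ε)} = Σ_T; that is, the set Σ_T of solutions of the SOV quadratic system is invariant under the Z₂×Z₂×Z₂ transformations (τ₊, α₊, β₊, τ₋, α₋, β₋) ↦ (ε_τ τ₊, ε_α α₊, ε_β β₊, ε_τ τ₋, ε_α α₋, ε_β β₋) of the boundary parameters. -/

import Mathlib

/-!
Centred at `η/2`, the boundary functions read
`g±(η/2 + x) = sinh(x + α±) cosh(x ∓ β±) / (sinh α± cosh β±)`. Hence `α± ↦ -α±` only flips the sign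
of `x` in the first factor and `β± ↦ -β±` only flips it in the second. The functions `g±` contribute
to the system at three kinds of points:

* `A(η/2)` is taken at `x = 0`, which the flips fix;
* `A(η/2 + iπ/2)` is taken at `x = iπ/2`, where each flip is a shift by `iπ` and so changes the sign
  of the factor; a simultaneous flip of the `+` and `-` parameters cancels in `g₊ g₋`;
* `q_n` contains the values at `x = ξ_n` and `x = -ξ_n`, whose factors the flips merely interchange.

The remaining coefficient of `f` depends on `τ±` through the even function `cosh(τ₊ - τ₋)`, and on
the other parameters through `sinh α₊ sinh α₋` and `cosh β₊ cosh β₋`.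
-/

open Complex Finset

noncomputable section

namespace XXZ

/-- `a(λ) = ∏ₙ sinh(λ - ξₙ + η/2)` -/
def aF (N : ℕ) (η : ℂ) (ξ : Fin N → ℂ) (z : ℂ) : ℂ :=
  ∏ n : Fin N, Complex.sinh (z - ξ n + η / 2)

/-- `d(λ) = a(λ - η)` -/
def dF (N : ℕ) (η : ℂ) (ξ : Fin N → ℂ) (z : ℂ) : ℂ := aF N η ξ (z - η)

/-- `g₊(λ)` -/
def gPlus (η αp βp : ℂ) (z : ℂ) : ℂ :=
  Complex.sinh (z + αp - η / 2) * Complex.cosh (z - βp - η / 2) /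
    (Complex.sinh αp * Complex.cosh βp)

/-- `g₋(λ)` -/
def gMinus (η αm βm : ℂ) (z : ℂ) : ℂ :=
  Complex.sinh (z + αm - η / 2) * Complex.cosh (z + βm - η / 2) /
    (Complex.sinh αm * Complex.cosh βm)

/-- `A(λ)` -/
def AF (N : ℕ) (η : ℂ) (ξ : Fin N → ℂ) (αp βp αm βm : ℂ) (z : ℂ) : ℂ :=
  (-1 : ℂ) ^ N * (Complex.sinh (2 * z + η) / Complex.sinh (2 * z)) *
    gPlus η αp βp z * gMinus η αm βm z * aF N η ξ z * dF N η ξ (-z)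

/-- `ζₙ⁽⁰⁾ = ξₙ - η/2` -/
def zeta0 (N : ℕ) (η : ℂ) (ξ : Fin N → ℂ) (n : Fin N) : ℂ := ξ n - η / 2

/-- `ζₙ⁽¹⁾ = ξₙ + η/2` -/
def zeta1 (N : ℕ) (η : ℂ) (ξ : Fin N → ℂ) (n : Fin N) : ℂ := ξ n + η / 2

/-- `g_a(λ)` -/
def gA (N : ℕ) (η : ℂ) (ξ : Fin N → ℂ) (a : Fin N) (z : ℂ) : ℂ :=
  (Complex.cosh (2 * z) ^ 2 - Complex.cosh η ^ 2) /
      (Complex.cosh (2 * zeta0 N η ξ a) ^ 2 - Complex.cosh η ^ 2) *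
    ∏ b ∈ Finset.univ.erase a,
      (Complex.cosh (2 * z) - Complex.cosh (2 * zeta0 N η ξ b)) /
        (Complex.cosh (2 * zeta0 N η ξ a) - Complex.cosh (2 * zeta0 N η ξ b))

/-- `f(λ)`, with `κ₊κ₋/(sinh ζ₊ sinh ζ₋)` expressed as
`1/(4 sinh α₊ cosh β₊ sinh α₋ cosh β₋)`. -/
def fF (N : ℕ) (η : ℂ) (ξ : Fin N → ℂ) (τp τm αp βp αm βm : ℂ) (z : ℂ) : ℂ :=
  (Complex.cosh (2 * z) + Complex.cosh η) / (2 * Complex.cosh η) *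
      (∏ b : Fin N, (Complex.cosh (2 * z) - Complex.cosh (2 * zeta0 N η ξ b)) /
        (Complex.cosh η - Complex.cosh (2 * zeta0 N η ξ b))) *
      AF N η ξ αp βp αm βm (η / 2)
  - (-1 : ℂ) ^ N * ((Complex.cosh (2 * z) - Complex.cosh η) / (2 * Complex.cosh η)) *
      (∏ b : Fin N, (Complex.cosh (2 * z) - Complex.cosh (2 * zeta0 N η ξ b)) /
        (Complex.cosh η + Complex.cosh (2 * zeta0 N η ξ b))) *
      AF N η ξ αp βp αm βm (η / 2 + Real.pi * Complex.I / 2)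
  + (2 : ℂ) ^ ((1 : ℤ) - (N : ℤ)) *
      (Complex.cosh (τp - τm) /
        (4 * Complex.sinh αp * Complex.cosh βp * Complex.sinh αm * Complex.cosh βm)) *
      (Complex.cosh (2 * z) ^ 2 - Complex.cosh η ^ 2) *
      ∏ b : Fin N, (Complex.cosh (2 * z) - Complex.cosh (2 * zeta0 N η ξ b))

/-- `qₙ` -/
def qF (N : ℕ) (η : ℂ) (ξ : Fin N → ℂ) (αp βp αm βm : ℂ) (n : Fin N) : ℂ :=
  Complex.sinh (2 * η - 2 * ξ n) * Complex.sinh (2 * ξ n + 2 * η) *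
    gPlus η αp βp (ξ n + η / 2) * gPlus η αp βp (η / 2 - ξ n) *
    gMinus η αm βm (ξ n + η / 2) * gMinus η αm βm (η / 2 - ξ n) *
    aF N η ξ (ξ n + η / 2) * dF N η ξ (ξ n - η / 2) *
    aF N η ξ (η / 2 - ξ n) * dF N η ξ (-ξ n - η / 2) /
    (Complex.sinh (η + 2 * ξ n) * Complex.sinh (η - 2 * ξ n))

/-- `Σ_T` (as a function of the boundary parameters `τ±, α±, β±`). -/
def SigmaT (N : ℕ) (η : ℂ) (ξ : Fin N → ℂ) (τp τm αp βp αm βm : ℂ) : Set (ℂ → ℂ) :=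
  { t | ∃ x : Fin N → ℂ,
      (∀ n : Fin N,
        x n * ((∑ a : Fin N, gA N η ξ a (zeta1 N η ξ n) * x a) +
          fF N η ξ τp τm αp βp αm βm (zeta1 N η ξ n)) = qF N η ξ αp βp αm βm n) ∧
      t = fun z => fF N η ξ τp τm αp βp αm βm z + ∑ a : Fin N, gA N η ξ a z * x a }

/-- genericity of the inhomogeneity parameters -/
def Generic (N : ℕ) (η : ℂ) (ξ : Fin N → ℂ) : Prop :=
  (∀ a b : Fin N, a ≠ b → ∀ r : ℤ, |r| ≤ 1 → ∀ k : ℤ,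
      ξ a + ξ b - r * η ≠ Real.pi * Complex.I * k ∧
      ξ a - ξ b - r * η ≠ Real.pi * Complex.I * k) ∧
  ∀ a : Fin N, Complex.cosh (2 * zeta0 N η ξ a) ^ 2 ≠ Complex.cosh η ^ 2

/-- `Y⁽ⁱ'ʳ⁾(τ±, α±, β±)` -/
def YF (N : ℕ) (η τp τm αp βp αm βm : ℂ) (i : ℕ) (r : ℤ) : ℂ :=
  τm - τp + (-1 : ℂ) ^ i * (((N : ℂ) - 1 - (r : ℂ)) * η + αm + αp + βm - βp)

/-- `X_{k,m}⁽ⁱ⁾` -/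
def XF (N : ℕ) (η τp τm αp βp αm βm : ℂ) (i k m : ℕ) : ℂ :=
  (-1 : ℂ) ^ i * (1 - (N : ℂ)) * η + τm - τp + (-1 : ℂ) ^ k * (αm + βm) -
    (-1 : ℂ) ^ m * (αp - βp) + Real.pi * Complex.I * ((k : ℂ) + (m : ℂ))

/-- the boundary parameters lie in `N_SOV` -/
def InNSOV (N : ℕ) (η τp τm αp βp αm βm : ℂ) : Prop :=
  ∃ k h m n : Fin 2,
    XF N η τp τm αp βp αm βm 0 (k : ℕ) (m : ℕ) = 0 ∧
    XF N η τp τm αp βp αm βm 1 (h : ℕ) (n : ℕ) = 0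

/-- `F₀` (in the `τ, α, β` parametrization) -/
def F0 (N : ℕ) (η τp τm αp βp αm βm : ℂ) : ℂ :=
  (Complex.cosh (τp - τm) - Complex.cosh (αp + αm - βp + βm - ((N : ℂ) + 1) * η)) /
    (2 * Complex.sinh αp * Complex.cosh βp * Complex.sinh αm * Complex.cosh βm)

/-- the inhomogeneous term `F(λ)` -/
def FF (N : ℕ) (η : ℂ) (ξ : Fin N → ℂ) (τp τm αp βp αm βm : ℂ) (z : ℂ) : ℂ :=
  2 ^ N * F0 N η τp τm αp βp αm βm *
    (Complex.cosh (2 * z) ^ 2 - Complex.cosh η ^ 2) *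
    aF N η ξ z * aF N η ξ (-z) * dF N η ξ z * dF N η ξ (-z)

/-- `Q` is of Bethe form of degree `N` -/
def BetheForm (N : ℕ) (Q : ℂ → ℂ) : Prop :=
  ∃ l : Fin N → ℂ, ∀ z : ℂ,
    Q z = 2 ^ N * ∏ a : Fin N, (Complex.cosh (2 * z) - Complex.cosh (2 * l a))

/-- `Z_Q(λ) = A(λ)Q(λ-η) + A(-λ)Q(λ+η)` -/
def ZZ (N : ℕ) (η : ℂ) (ξ : Fin N → ℂ) (αp βp αm βm : ℂ) (Q : ℂ → ℂ) (z : ℂ) : ℂ :=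
  AF N η ξ αp βp αm βm z * Q (z - η) + AF N η ξ αp βp αm βm (-z) * Q (z + η)

/-- `t` is a trigonometric polynomial of degree `M` -/
def IsTrigPolyDeg (M : ℕ) (t : ℂ → ℂ) : Prop :=
  ∃ P : Polynomial ℂ, P.natDegree = M ∧
    ∀ z : ℂ, Complex.exp ((M : ℂ) * z) * t z = Polynomial.eval (Complex.exp (2 * z)) P

/-- `t` is a trigonometric polynomial -/
def IsTrigPoly (t : ℂ → ℂ) : Prop := ∃ M : ℕ, IsTrigPolyDeg M t

section SignMul

variable {ε : ℂ}

theorem sinh_sign_mul (hε : ε = 1 ∨ ε = -1) (x : ℂ) : sinh (ε * x) = ε * sinh x := by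
  rcases hε with rfl | rfl <;> simp only [one_mul, neg_one_mul, sinh_neg]

theorem cosh_sign_mul (hε : ε = 1 ∨ ε = -1) (x : ℂ) : cosh (ε * x) = cosh x := by
  rcases hε with rfl | rfl <;> simp only [one_mul, neg_one_mul, cosh_neg]

theorem sinh_add_sign_mul (hε : ε = 1 ∨ ε = -1) (x y : ℂ) :
    sinh (x + ε * y) = ε * sinh (ε * x + y) := by
  rw [← sinh_sign_mul hε, mul_add, ← mul_assoc, mul_self_eq_one_iff.2 hε, one_mul]

theorem cosh_sub_sign_mul (hε : ε = 1 ∨ ε = -1) (x y : ℂ) :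
    cosh (x - ε * y) = cosh (ε * x - y) := by
  rw [← cosh_sign_mul hε, mul_sub, ← mul_assoc, mul_self_eq_one_iff.2 hε, one_mul]

theorem sinh_sign_mul_add_of_cosh_eq_zero (hε : ε = 1 ∨ ε = -1) {u : ℂ} (hu : cosh u = 0) (x : ℂ) :
    sinh (ε * u + x) = ε * sinh (u + x) := by
  rw [sinh_add, sinh_add, sinh_sign_mul hε, cosh_sign_mul hε, hu]
  ring

theorem cosh_sign_mul_sub_of_cosh_eq_zero (hε : ε = 1 ∨ ε = -1) {u : ℂ} (hu : cosh u = 0) (x : ℂ) :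
    cosh (ε * u - x) = ε * cosh (u - x) := by
  rw [cosh_sub, cosh_sub, sinh_sign_mul hε, cosh_sign_mul hε, hu]
  ring

end SignMul

section BoundaryFunctions

variable {εa εb : ℂ}

theorem gPlus_half_add (η α β x : ℂ) :
    gPlus η α β (η / 2 + x) = sinh (x + α) * cosh (x - β) / (sinh α * cosh β) := by
  rw [gPlus, show η / 2 + x + α - η / 2 = x + α by ring,
    show η / 2 + x - β - η / 2 = x - β by ring]

theorem gMinus_eq_gPlus_neg (η α β z : ℂ) : gMinus η α β z = gPlus η α (-β) z := by
  rw [gMinus, gPlus, sub_neg_eq_add, cosh_neg]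

theorem gPlus_sign_mul_half_add (hεa : εa = 1 ∨ εa = -1) (hεb : εb = 1 ∨ εb = -1)
    (η α β x : ℂ) :
    gPlus η (εa * α) (εb * β) (η / 2 + x) =
      sinh (εa * x + α) * cosh (εb * x - β) / (sinh α * cosh β) := by
  have hεa_ne : εa ≠ 0 := left_ne_zero_of_mul_eq_one (mul_self_eq_one_iff.2 hεa)
  rw [gPlus_half_add, sinh_add_sign_mul hεa, cosh_sub_sign_mul hεb, sinh_sign_mul hεa,
    cosh_sign_mul hεb, mul_assoc, mul_assoc, mul_div_mul_left _ _ hεa_ne]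

theorem gPlus_sign_mul_half (hεa : εa = 1 ∨ εa = -1) (hεb : εb = 1 ∨ εb = -1) (η α β : ℂ) :
    gPlus η (εa * α) (εb * β) (η / 2) = gPlus η α β (η / 2) := by
  rw [← add_zero (η / 2), gPlus_sign_mul_half_add hεa hεb, gPlus_half_add, mul_zero, mul_zero]

theorem gPlus_sign_mul_half_add_pi_div_two (hεa : εa = 1 ∨ εa = -1) (hεb : εb = 1 ∨ εb = -1)
    (η α β : ℂ) :
    gPlus η (εa * α) (εb * β) (η / 2 + Real.pi * I / 2) =
      εa * εb * gPlus η α β (η / 2 + Real.pi * I / 2) := by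
  have cosh_eq_zero : cosh (Real.pi * I / 2) = 0 := by
    rw [mul_div_right_comm, cosh_mul_I, Complex.cos_pi_div_two]
  rw [gPlus_sign_mul_half_add hεa hεb, gPlus_half_add,
    sinh_sign_mul_add_of_cosh_eq_zero hεa cosh_eq_zero,
    cosh_sign_mul_sub_of_cosh_eq_zero hεb cosh_eq_zero]
  ring

theorem gPlus_mul_gMinus_sign_mul_half_add_pi_div_two
    (hεa : εa = 1 ∨ εa = -1) (hεb : εb = 1 ∨ εb = -1) (η αp βp αm βm : ℂ) :
    gPlus η (εa * αp) (εb * βp) (η / 2 + Real.pi * I / 2) *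
        gMinus η (εa * αm) (εb * βm) (η / 2 + Real.pi * I / 2) =
      gPlus η αp βp (η / 2 + Real.pi * I / 2) * gMinus η αm βm (η / 2 + Real.pi * I / 2) := by
  have signs_sq : (εa * εb) * (εa * εb) = 1 := by
    rw [mul_mul_mul_comm, mul_self_eq_one_iff.2 hεa, mul_self_eq_one_iff.2 hεb, one_mul]
  rw [gMinus_eq_gPlus_neg, gMinus_eq_gPlus_neg, ← mul_neg,
    gPlus_sign_mul_half_add_pi_div_two hεa hεb, gPlus_sign_mul_half_add_pi_div_two hεa hεb,
    mul_mul_mul_comm, signs_sq, one_mul]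

theorem gPlus_sign_mul_mul_reflection (hεa : εa = 1 ∨ εa = -1) (hεb : εb = 1 ∨ εb = -1)
    (η α β x : ℂ) :
    gPlus η (εa * α) (εb * β) (x + η / 2) * gPlus η (εa * α) (εb * β) (η / 2 - x) =
      gPlus η α β (x + η / 2) * gPlus η α β (η / 2 - x) := by
  rw [add_comm x, sub_eq_add_neg, gPlus_sign_mul_half_add hεa hεb, gPlus_sign_mul_half_add hεa hεb,
    gPlus_half_add, gPlus_half_add]
  rcases hεa with rfl | rfl <;> rcases hεb with rfl | rfl <;>
    simp only [one_mul, neg_one_mul, neg_neg] <;> ring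

theorem gMinus_sign_mul_mul_reflection (hεa : εa = 1 ∨ εa = -1) (hεb : εb = 1 ∨ εb = -1)
    (η α β x : ℂ) :
    gMinus η (εa * α) (εb * β) (x + η / 2) * gMinus η (εa * α) (εb * β) (η / 2 - x) =
      gMinus η α β (x + η / 2) * gMinus η α β (η / 2 - x) := by
  simp only [gMinus_eq_gPlus_neg, ← mul_neg, gPlus_sign_mul_mul_reflection hεa hεb]

end BoundaryFunctions

section SolutionSet

variable (N : ℕ) (η : ℂ) (ξ : Fin N → ℂ) (τp τm αp βp αm βm : ℂ) {εt εa εb : ℂ}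

theorem AF_sign_mul_half (hεa : εa = 1 ∨ εa = -1) (hεb : εb = 1 ∨ εb = -1) :
    AF N η ξ (εa * αp) (εb * βp) (εa * αm) (εb * βm) (η / 2) =
      AF N η ξ αp βp αm βm (η / 2) := by
  simp only [AF, gMinus_eq_gPlus_neg, ← mul_neg, gPlus_sign_mul_half hεa hεb]

theorem AF_sign_mul_half_add_pi_div_two (hεa : εa = 1 ∨ εa = -1) (hεb : εb = 1 ∨ εb = -1) :
    AF N η ξ (εa * αp) (εb * βp) (εa * αm) (εb * βm) (η / 2 + Real.pi * I / 2) =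
      AF N η ξ αp βp αm βm (η / 2 + Real.pi * I / 2) := by
  simp only [AF, mul_assoc _ (gPlus _ _ _ _) (gMinus _ _ _ _),
    gPlus_mul_gMinus_sign_mul_half_add_pi_div_two hεa hεb]

theorem fF_sign_mul (hεt : εt = 1 ∨ εt = -1) (hεa : εa = 1 ∨ εa = -1) (hεb : εb = 1 ∨ εb = -1)
    (z : ℂ) :
    fF N η ξ (εt * τp) (εt * τm) (εa * αp) (εb * βp) (εa * αm) (εb * βm) z =
      fF N η ξ τp τm αp βp αm βm z := by
  have cosh_τ : cosh (εt * τp - εt * τm) = cosh (τp - τm) := by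
    rw [← mul_sub, cosh_sign_mul hεt]
  have denominator : 4 * sinh (εa * αp) * cosh (εb * βp) * sinh (εa * αm) * cosh (εb * βm) =
      4 * sinh αp * cosh βp * sinh αm * cosh βm := by
    rw [sinh_sign_mul hεa, sinh_sign_mul hεa, cosh_sign_mul hεb, cosh_sign_mul hεb]
    linear_combination
      (4 * sinh αp * cosh βp * sinh αm * cosh βm) * mul_self_eq_one_iff.2 hεa
  simp only [fF, AF_sign_mul_half N η ξ αp βp αm βm hεa hεb,
    AF_sign_mul_half_add_pi_div_two N η ξ αp βp αm βm hεa hεb, cosh_τ, denominator]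

theorem qF_sign_mul (hεa : εa = 1 ∨ εa = -1) (hεb : εb = 1 ∨ εb = -1) (n : Fin N) :
    qF N η ξ (εa * αp) (εb * βp) (εa * αm) (εb * βm) n = qF N η ξ αp βp αm βm n := by
  simp only [qF, mul_assoc _ (gPlus _ _ _ _) (gPlus _ _ _ _),
    mul_assoc _ (gMinus _ _ _ _) (gMinus _ _ _ _), gPlus_sign_mul_mul_reflection hεa hεb,
    gMinus_sign_mul_mul_reflection hεa hεb]

end SolutionSet

/-- Lemma 5.1 / `Lem-invariance`: the SOV spectrum `Σ_T` is invariant under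
the `Z₂×Z₂×Z₂` sign transformations of the boundary parameters `(τ±, α±, β±)`. -/
theorem statement7
    (N : ℕ) (hN : 1 ≤ N) (η : ℂ) (ξ : Fin N → ℂ)
    (τp τm αp αm βp βm : ℂ)
    (hαβp : Complex.sinh αp * Complex.cosh βp ≠ 0)
    (hαβp' : Complex.cosh αp * Complex.sinh βp ≠ 0)
    (hαβm : Complex.sinh αm * Complex.cosh βm ≠ 0)
    (hαβm' : Complex.cosh αm * Complex.sinh βm ≠ 0)
    (hζ1 : ∀ a : Fin N, Complex.cosh (2 * zeta0 N η ξ a) ^ 2 ≠ Complex.cosh η ^ 2)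
    (hζ2 : ∀ a b : Fin N, a ≠ b →
      Complex.cosh (2 * zeta0 N η ξ a) ≠ Complex.cosh (2 * zeta0 N η ξ b))
    (εt εa εb : ℂ)
    (hεt : εt = 1 ∨ εt = -1) (hεa : εa = 1 ∨ εa = -1) (hεb : εb = 1 ∨ εb = -1) :
    SigmaT N η ξ (εt * τp) (εt * τm) (εa * αp) (εb * βp) (εa * αm) (εb * βm) =
      SigmaT N η ξ τp τm αp βp αm βm := by
  simp only [SigmaT, fF_sign_mul N η ξ τp τm αp βp αm βm hεt hεa hεb,
    qF_sign_mul N η ξ αp βp αm βm hεa hεb]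

end XXZ
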